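/- Let A be a nonzero real symmetric n×n matrix and x ~ N(0, Iₙ). With κ := (1/4)·max_{0<r<1} min{r, 1/(2ξ_r)} where ξ_r := ∑_{k=0}^∞ r^k/(k+2), one has P(|xᵀAx - E[xᵀAx]| ≥ a) ≤ 2·exp(-κ·min{a²/‖A‖₂², a/‖A‖}) for every a > 0. -/

import Mathlib

open MeasureTheory ProbabilityTheory Matrix

noncomputable def xi (r : ℝ) : ℝ := ∑' k : ℕ, r ^ k / ((k : ℝ) + 2)

/-- The Euclidean operator norm of a matrix. -/
noncomputable def opNorm {n : ℕ} (A : Matrix (Fin n) (Fin n) ℝ) : ℝ :=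
  sSup {c | ∃ v : Fin n → ℝ, Real.sqrt (∑ i, v i ^ 2) ≤ 1 ∧
    c = Real.sqrt (∑ i, (A.mulVec v i) ^ 2)}

/-- The constant κ = (1/4)·sup_{0<r<1} min{r, 1/(2ξ_r)}. -/
noncomputable def kappa : ℝ :=
  (1/4) * sSup {m | ∃ r ∈ Set.Ioo (0 : ℝ) 1, m = min r (1 / (2 * xi r))}

/-!
A rotation diagonalizes `A` and preserves the standard Gaussian measure, so `xᵀAx - E[xᵀAx]` has
the law of `∑ λᵢ (yᵢ² - 1)` with `y` standard Gaussian and `λᵢ` the eigenvalues of `A`. The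
logarithm of the moment-generating function of `y² - 1` is `(-log (1 - 2t) - 2t) / 2`, whose power
series is at most `2 t² ξ_r` when `|2t| ≤ r`. By independence the quadratic form inherits such a
bound, with the Frobenius norm controlling its size and the operator norm the range of `t`, and
Chernoff's inequality gives the tail for each `r`. It remains to optimize over `r`.
-/

section Xi

variable {r t : ℝ}

lemma summable_xi (hr₀ : 0 ≤ r) (hr₁ : r < 1) :
    Summable fun k : ℕ => r ^ k / ((k : ℝ) + 2) :=
  (summable_geometric_of_lt_one hr₀ hr₁).of_nonneg_of_le (fun k => by positivity) fun k =>
    div_le_self (by positivity) (by linarith [k.cast_nonneg (α := ℝ)])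

lemma xi_nonneg (hr₀ : 0 ≤ r) : 0 ≤ xi r :=
  tsum_nonneg fun k => by positivity

lemma neg_log_one_sub_sub_self_le_sq_mul_xi (hr : r < 1) (ht : |t| ≤ r) :
    -Real.log (1 - t) - t ≤ t ^ 2 * xi r := by
  have hlog : HasSum (fun k : ℕ => t ^ 2 * (t ^ k / ((k : ℝ) + 2))) (-Real.log (1 - t) - t) := by
    have h := (hasSum_nat_add_iff' 1).2 (Real.hasSum_pow_div_log_of_abs_lt_one (ht.trans_lt hr))
    simp only [Finset.sum_range_one, Nat.cast_zero, zero_add, pow_one, div_one] at h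
    refine h.congr_fun fun k => ?_
    push_cast
    ring
  have hxi := (summable_xi ((abs_nonneg t).trans ht) hr).hasSum.mul_left (t ^ 2)
  refine hasSum_le (fun k => ?_) hlog hxi
  have htr : t ^ k ≤ r ^ k :=
    (le_abs_self _).trans ((abs_pow t k).trans_le (pow_le_pow_left₀ (abs_nonneg t) ht k))
  gcongr

lemma le_two_mul_exp_neg_kappa_mul {p z : ℝ}
    (h : ∀ r ∈ Set.Ioo (0 : ℝ) 1, p ≤ 2 * Real.exp (-(1 / 4 * min r (1 / (2 * xi r)) * z))) :
    p ≤ 2 * Real.exp (-kappa * z) := by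
  set S := {m | ∃ r ∈ Set.Ioo (0 : ℝ) 1, m = min r (1 / (2 * xi r))}
  have hbdd : BddAbove S := ⟨1, by rintro _ ⟨r, hr, rfl⟩; exact (min_le_left _ _).trans hr.2.le⟩
  have hclosed : IsClosed {m : ℝ | p ≤ 2 * Real.exp (-(1 / 4 * m) * z)} :=
    isClosed_le continuous_const (by fun_prop)
  refine closure_minimal ?_ hclosed (csSup_mem_closure ⟨_, 1 / 2, by norm_num, rfl⟩ hbdd)
  rintro _ ⟨r, hr, rfl⟩
  simpa only [Set.mem_ofPred_eq, neg_mul] using h r hr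

end Xi

/-- `X` is sub-exponential with variance proxy `c` on the range `[-b, b]`: its moment-generating
function is at most the sub-Gaussian one `exp (c t² / 2)` for `|t| ≤ b`. This is the analogue of
`ProbabilityTheory.HasSubgaussianMGF` for variables whose exponential moments are only finite near
the origin. -/
structure HasSubexponentialMGF {Ω : Type*} {mΩ : MeasurableSpace Ω} (X : Ω → ℝ) (c b : ℝ)
    (μ : Measure Ω) : Prop where
  integrable_exp_mul : ∀ t, |t| ≤ b → Integrable (fun ω => Real.exp (t * X ω)) μ
  mgf_le : ∀ t, |t| ≤ b → mgf X μ t ≤ Real.exp (c * t ^ 2 / 2)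

namespace HasSubexponentialMGF

variable {Ω : Type*} {mΩ : MeasurableSpace Ω} {μ : Measure Ω} {X : Ω → ℝ} {b c : ℝ}

lemma congr_identDistrib {Ω' : Type*} {mΩ' : MeasurableSpace Ω'} {μ' : Measure Ω'} {Y : Ω' → ℝ}
    (hX : HasSubexponentialMGF X c b μ) (hXY : IdentDistrib X Y μ μ') :
    HasSubexponentialMGF Y c b μ' where
  integrable_exp_mul t ht :=
    (hXY.comp (u := fun x => Real.exp (t * x)) (by fun_prop)).integrable_iff.1
      (hX.integrable_exp_mul t ht)
  mgf_le t ht := mgf_congr_identDistrib hXY ▸ hX.mgf_le t ht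

lemma const_mul (hX : HasSubexponentialMGF X c b μ) (hb : 0 ≤ b) {s M : ℝ} (hs : |s| ≤ M) :
    HasSubexponentialMGF (fun ω => s * X ω) (c * s ^ 2) (b / M) μ := by
  have hst {t : ℝ} (ht : |t| ≤ b / M) : |t * s| ≤ b := by
    have hM : 0 ≤ M := (abs_nonneg s).trans hs
    calc |t * s| = |t| * |s| := abs_mul t s
      _ ≤ b / M * M := by gcongr
      _ = M / M * b := div_mul_comm b M M
      _ ≤ b := mul_le_of_le_one_left hb (div_self_le_one M)
  refine ⟨fun t ht => ?_, fun t ht => ?_⟩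
  · simpa only [mul_assoc] using hX.integrable_exp_mul (t * s) (hst ht)
  · rw [mgf_const_mul, mul_comm s t]
    exact (hX.mgf_le (t * s) (hst ht)).trans_eq (by ring_nf)

lemma neg (hX : HasSubexponentialMGF X c b μ) : HasSubexponentialMGF (-X) c b μ where
  integrable_exp_mul t ht := by
    simpa using hX.integrable_exp_mul (-t) (by rwa [abs_neg])
  mgf_le t ht := by
    simpa [mgf_neg] using hX.mgf_le (-t) (by rwa [abs_neg])

lemma sum_of_iIndepFun {ι : Type*} {X : ι → Ω → ℝ} {c : ι → ℝ} (hindep : iIndepFun X μ)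
    (hmeas : ∀ i, Measurable (X i)) {s : Finset ι}
    (hX : ∀ i ∈ s, HasSubexponentialMGF (X i) (c i) b μ) :
    HasSubexponentialMGF (∑ i ∈ s, X i) (∑ i ∈ s, c i) b μ where
  integrable_exp_mul t ht :=
    have := hindep.isProbabilityMeasure
    hindep.integrable_exp_mul_sum hmeas fun i hi => (hX i hi).integrable_exp_mul t ht
  mgf_le t ht :=
    calc mgf (∑ i ∈ s, X i) μ t = ∏ i ∈ s, mgf (X i) μ t := hindep.mgf_sum hmeas s
      _ ≤ ∏ i ∈ s, Real.exp (c i * t ^ 2 / 2) :=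
        Finset.prod_le_prod (fun _ _ => mgf_nonneg) fun i hi => (hX i hi).mgf_le t ht
      _ = Real.exp ((∑ i ∈ s, c i) * t ^ 2 / 2) := by
        rw [← Real.exp_sum, Finset.sum_mul, Finset.sum_div]

variable [IsFiniteMeasure μ] {a : ℝ}

lemma measureReal_ge_le (hX : HasSubexponentialMGF X c b μ) (hc : 0 ≤ c) (hb : 0 ≤ b)
    (ha : 0 ≤ a) :
    μ.real {ω | a ≤ X ω} ≤ Real.exp (-min (a ^ 2 / (2 * c)) (a * b / 2)) := by
  -- `t = a / c` minimizes the Chernoff exponent `c t² / 2 - t a`, when it lies in the range.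
  set t := min (a / c) b
  have ht₀ : 0 ≤ t := by positivity
  have htb : |t| ≤ b := (abs_of_nonneg ht₀).trans_le (min_le_right _ _)
  have htc : c * t ≤ a :=
    calc c * t ≤ c * (a / c) := by gcongr; exact min_le_left _ _
      _ = a * (c / c) := mul_div_left_comm c a c
      _ ≤ a := mul_le_of_le_one_right ha (div_self_le_one c)
  have hmin : t * a / 2 = min (a ^ 2 / (2 * c)) (a * b / 2) := by
    rw [min_mul_of_nonneg _ _ ha, ← min_div_div_right zero_le_two]
    congr 1 <;> ring
  calc μ.real {ω | a ≤ X ω} ≤ Real.exp (-t * a) * mgf X μ t :=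
        measure_ge_le_exp_mul_mgf a ht₀ (hX.integrable_exp_mul t htb)
    _ ≤ Real.exp (-t * a) * Real.exp (c * t ^ 2 / 2) := by gcongr; exact hX.mgf_le t htb
    _ ≤ Real.exp (-(t * a / 2)) := by
        rw [← Real.exp_add, Real.exp_le_exp]
        nlinarith
    _ = _ := by rw [hmin]

lemma measureReal_abs_ge_le (hX : HasSubexponentialMGF X c b μ) (hc : 0 ≤ c) (hb : 0 ≤ b)
    (ha : 0 ≤ a) :
    μ.real {ω | a ≤ |X ω|} ≤ 2 * Real.exp (-min (a ^ 2 / (2 * c)) (a * b / 2)) := by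
  have hunion : {ω | a ≤ |X ω|} = {ω | a ≤ X ω} ∪ {ω | a ≤ (-X) ω} := by
    ext ω
    exact le_abs (α := ℝ)
  rw [hunion, two_mul]
  exact (measureReal_union_le _ _).trans
    (add_le_add (hX.measureReal_ge_le hc hb ha) (hX.neg.measureReal_ge_le hc hb ha))

end HasSubexponentialMGF

section ChiSquare

-- For `2 v t ≥ 1` the integral diverges and both sides are zero by convention.
lemma mgf_sq_gaussianReal (v : NNReal) (t : ℝ) :
    mgf (fun x : ℝ => x ^ 2) (gaussianReal 0 v) t = (√(1 - 2 * v * t))⁻¹ := by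
  obtain rfl | hv := eq_or_ne v 0
  · simp [mgf]
  have hdensity (x : ℝ) : gaussianPDFReal 0 v x * Real.exp (t * x ^ 2) =
      (√(2 * Real.pi * v))⁻¹ * Real.exp (-((1 - 2 * v * t) / (2 * v)) * x ^ 2) := by
    rw [gaussianPDFReal, mul_assoc, ← Real.exp_add]
    congr 2
    field_simp
    ring
  simp only [mgf, integral_gaussianReal_eq_integral_smul hv, smul_eq_mul, hdensity]
  rw [integral_const_mul, integral_gaussian, ← Real.sqrt_inv, ← Real.sqrt_mul (by positivity),
    ← Real.sqrt_inv]
  congr 1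
  field_simp

lemma integrable_exp_mul_sq_gaussianReal {v : NNReal} {t : ℝ} (ht : 2 * v * t < 1) :
    Integrable (fun x : ℝ => Real.exp (t * x ^ 2)) (gaussianReal 0 v) := by
  rw [← mgf_pos_iff, mgf_sq_gaussianReal]
  exact inv_pos.2 (Real.sqrt_pos.2 (sub_pos.2 ht))

lemma hasSubexponentialMGF_sq_sub_one_gaussianReal {r : ℝ} (hr : r < 1) :
    HasSubexponentialMGF (fun x : ℝ => x ^ 2 - 1) (4 * xi r) (r / 2) (gaussianReal 0 1) := by
  have habs {t : ℝ} (ht : |t| ≤ r / 2) : |2 * t| ≤ r := by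
    rw [abs_mul, abs_two]
    linarith
  have hlt {t : ℝ} (ht : |t| ≤ r / 2) : 2 * t < 1 :=
    (le_abs_self _).trans_lt ((habs ht).trans_lt hr)
  refine ⟨fun t ht => ?_, fun t ht => ?_⟩
  · simp only [mul_sub, Real.exp_sub]
    exact (integrable_exp_mul_sq_gaussianReal (by simpa using hlt ht)).div_const _
  · have hpos : 0 < 1 - 2 * t := sub_pos.2 (hlt ht)
    simp only [sub_eq_add_neg _ (1 : ℝ)]
    calc mgf (fun x : ℝ => x ^ 2 + -1) (gaussianReal 0 1) t
        = (√(1 - 2 * t))⁻¹ * Real.exp (-t) := by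
          rw [mgf_add_const, mgf_sq_gaussianReal]
          simp
      _ = Real.exp ((-Real.log (1 - 2 * t) - 2 * t) / 2) := by
          rw [Real.sqrt_eq_rpow, ← Real.rpow_neg hpos.le, Real.rpow_def_of_pos hpos,
            ← Real.exp_add]
          ring_nf
      _ ≤ Real.exp (4 * xi r * t ^ 2 / 2) := by
          gcongr
          linarith [neg_log_one_sub_sub_self_le_sq_mul_xi hr (habs ht)]

end ChiSquare

/-- The standard Gaussian measure on `ι → ℝ`. -/
local notation "γ[" ι "]" => Measure.pi fun _ : ι => gaussianReal 0 1

section Diagonal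

variable {ι : Type*} [Fintype ι] (w : ι → ℝ)

lemma identDistrib_eval_pi {Ω : ι → Type*} [∀ i, MeasurableSpace (Ω i)]
    (μ : ∀ i, Measure (Ω i)) [∀ i, IsProbabilityMeasure (μ i)] (i : ι) :
    IdentDistrib id (fun ω => ω i) (μ i) (Measure.pi μ) where
  aemeasurable_fst := aemeasurable_id
  aemeasurable_snd := (measurePreserving_eval μ i).aemeasurable
  map_eq := Measure.map_id.trans (measurePreserving_eval μ i).map_eq.symm

lemma hasSubexponentialMGF_sum_mul_sq_sub_one {M r : ℝ} (hr₀ : 0 ≤ r) (hr₁ : r < 1)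
    (hM : ∀ i, |w i| ≤ M) :
    HasSubexponentialMGF (∑ i, fun y : ι → ℝ => w i * (y i ^ 2 - 1))
      (4 * xi r * ∑ i, w i ^ 2) (r / (2 * M)) γ[ι] := by
  have hindep : iIndepFun (fun i (y : ι → ℝ) => w i * (y i ^ 2 - 1)) γ[ι] :=
    iIndepFun_pi (X := fun i x => w i * (x ^ 2 - 1)) fun i => by fun_prop
  rw [Finset.mul_sum, ← div_div]
  refine .sum_of_iIndepFun hindep (by fun_prop) fun i _ => ?_
  have hcoord := (identDistrib_eval_pi (fun _ : ι => gaussianReal 0 1) i).comp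
    (u := fun x => x ^ 2 - 1) (by fun_prop)
  exact ((hasSubexponentialMGF_sq_sub_one_gaussianReal hr₁).congr_identDistrib hcoord).const_mul
    (by positivity) (hM i)

lemma integral_sq_gaussianReal (v : NNReal) : ∫ x, x ^ 2 ∂gaussianReal 0 v = v := by
  simpa using (variance_of_integral_eq_zero (X := fun x => x) aemeasurable_id
    (integral_id_gaussianReal (μ := 0) (v := v))).symm

lemma integral_sum_mul_sq_pi_gaussianReal :
    ∫ y, ∑ i, w i * y i ^ 2 ∂γ[ι] = ∑ i, w i := by
  have hsq : Integrable (fun x : ℝ => x ^ 2) (gaussianReal 0 1) :=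
    (memLp_id_gaussianReal 2).integrable_sq
  have hcoord (i : ι) : IdentDistrib (fun x => x ^ 2) (fun y => y i ^ 2) (gaussianReal 0 1) γ[ι] :=
    (identDistrib_eval_pi (fun _ => gaussianReal 0 1) i).comp (u := fun x => x ^ 2) (by fun_prop)
  rw [integral_finsetSum _ fun i _ => ((hcoord i).integrable_iff.1 hsq).const_mul (w i)]
  refine Finset.sum_congr rfl fun i _ => ?_
  rw [integral_const_mul, ← (hcoord i).integral_eq, integral_sq_gaussianReal, NNReal.coe_one,
    mul_one]

end Diagonal

section Spectral

variable {𝕜 ι : Type*} [RCLike 𝕜] [Fintype ι] [DecidableEq ι]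

lemma trace_conjTranspose_mul_self_eq_sum_eigenvalues_sq {A : Matrix ι ι 𝕜} (hA : A.IsHermitian) :
    (Aᴴ * A).trace = ∑ i, (hA.eigenvalues i : 𝕜) ^ 2 := by
  rw [hA.eq]
  conv_lhs => rw [hA.spectral_theorem]
  rw [← map_mul, Unitary.conjStarAlgAut_apply, trace_mul_cycle]
  simp [pow_two]

open scoped Matrix.Norms.L2Operator in
lemma abs_eigenvalues_le_l2_opNorm {A : Matrix ι ι 𝕜} (hA : A.IsHermitian) (i : ι) :
    |hA.eigenvalues i| ≤ ‖A‖ := by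
  have h := l2_opNorm_mulVec A (hA.eigenvectorBasis i)
  rw [hA.mulVec_eigenvectorBasis] at h
  simpa [norm_smul] using h

open scoped Matrix.Norms.L2Operator in
lemma opNorm_eq_l2_opNorm {n : ℕ} (A : Matrix (Fin n) (Fin n) ℝ) : opNorm A = ‖A‖ := by
  rw [l2_opNorm_def, ← ContinuousLinearMap.sSup_unitClosedBall_eq_norm, opNorm]
  congr 1
  ext c
  rw [Set.mem_image, (WithLp.equiv 2 (Fin n → ℝ)).exists_congr_left]
  simp [EuclideanSpace.norm_eq, eq_comm]

lemma dotProduct_mulVec_sum_eigenvectorBasis {A : Matrix ι ι ℝ} (hA : A.IsHermitian)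
    (y : ι → ℝ) :
    (∑ i, y i • hA.eigenvectorBasis i).ofLp ⬝ᵥ A *ᵥ (∑ i, y i • hA.eigenvectorBasis i).ofLp =
      ∑ i, hA.eigenvalues i * y i ^ 2 := by
  set b := hA.eigenvectorBasis
  have hAb : A *ᵥ (∑ i, y i • b i).ofLp = (∑ i, (hA.eigenvalues i * y i) • b i).ofLp := by
    simp [b, mulVec_sum, mulVec_smul, hA.mulVec_eigenvectorBasis, smul_smul, mul_comm]
  calc (∑ i, y i • b i).ofLp ⬝ᵥ A *ᵥ (∑ i, y i • b i).ofLp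
      = inner ℝ (∑ i, (hA.eigenvalues i * y i) • b i) (∑ i, y i • b i) := by
        rw [hAb, EuclideanSpace.inner_eq_star_dotProduct, star_trivial]
    _ = ∑ i, hA.eigenvalues i * y i ^ 2 := by
        rw [b.orthonormal.inner_sum]
        simp [pow_two, mul_assoc]

end Spectral

section QuadraticForm

variable {ι : Type*} [Fintype ι]

lemma identDistrib_toLp_sum_smul_orthonormalBasis
    (b : OrthonormalBasis ι ℝ (EuclideanSpace ℝ ι)) :
    IdentDistrib (WithLp.toLp 2) (fun y : ι → ℝ => ∑ i, y i • b i) γ[ι] γ[ι] :=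
  ⟨by fun_prop, Measurable.aemeasurable (by fun_prop),
    map_pi_eq_stdGaussian.trans (stdGaussian_eq_map_pi_orthonormalBasis b)⟩

variable [DecidableEq ι] {A : Matrix ι ι ℝ}

lemma identDistrib_quadraticForm (hA : A.IsHermitian) :
    IdentDistrib (fun x => x ⬝ᵥ A *ᵥ x) (fun y => ∑ i, hA.eigenvalues i * y i ^ 2) γ[ι] γ[ι] := by
  have h := (identDistrib_toLp_sum_smul_orthonormalBasis hA.eigenvectorBasis).comp
    (u := fun x => x.ofLp ⬝ᵥ A *ᵥ x.ofLp) (by fun_prop)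
  simpa only [Function.comp_def, dotProduct_mulVec_sum_eigenvectorBasis hA] using h

open scoped Matrix.Norms.L2Operator

lemma hasSubexponentialMGF_quadraticForm (hA : A.IsHermitian) {r : ℝ} (hr₀ : 0 ≤ r)
    (hr₁ : r < 1) :
    HasSubexponentialMGF (fun x => x ⬝ᵥ A *ᵥ x - ∫ y, y ⬝ᵥ A *ᵥ y ∂γ[ι])
      (4 * xi r * (Aᵀ * A).trace) (r / (2 * ‖A‖)) γ[ι] := by
  have htrace : (Aᵀ * A).trace = ∑ i, hA.eigenvalues i ^ 2 := by
    simpa using trace_conjTranspose_mul_self_eq_sum_eigenvalues_sq hA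
  have hmean : ∫ y, y ⬝ᵥ A *ᵥ y ∂γ[ι] = ∑ i, hA.eigenvalues i :=
    (identDistrib_quadraticForm hA).integral_eq.trans (integral_sum_mul_sq_pi_gaussianReal _)
  have hcentred := ((identDistrib_quadraticForm hA).comp
    (u := fun q => q - ∑ i, hA.eigenvalues i) (by fun_prop)).symm
  rw [htrace, hmean]
  refine (hasSubexponentialMGF_sum_mul_sq_sub_one hA.eigenvalues hr₀ hr₁
    (abs_eigenvalues_le_l2_opNorm hA)).congr_identDistrib ?_
  simpa [Function.comp_def, Finset.sum_fn, mul_sub] using hcentred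

lemma measureReal_abs_quadraticForm_sub_integral_ge_le (hA : A.IsHermitian) {r a : ℝ}
    (hr₀ : 0 ≤ r) (hr₁ : r < 1) (ha : 0 ≤ a) :
    γ[ι].real {x | a ≤ |x ⬝ᵥ A *ᵥ x - ∫ y, y ⬝ᵥ A *ᵥ y ∂γ[ι]|} ≤
      2 * Real.exp
        (-(1 / 4 * min r (1 / (2 * xi r)) * min (a ^ 2 / (Aᵀ * A).trace) (a / ‖A‖))) := by
  have hxi := xi_nonneg hr₀
  have hF : 0 ≤ (Aᵀ * A).trace := by
    simpa using (posSemidef_conjTranspose_mul_self A).trace_nonneg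
  refine ((hasSubexponentialMGF_quadraticForm hA hr₀ hr₁).measureReal_abs_ge_le (by positivity)
    (by positivity) ha).trans ?_
  gcongr
  refine le_min ?_ ?_
  · calc 1 / 4 * min r (1 / (2 * xi r)) * min (a ^ 2 / (Aᵀ * A).trace) (a / ‖A‖)
        ≤ 1 / 4 * (1 / (2 * xi r)) * (a ^ 2 / (Aᵀ * A).trace) := by
          gcongr
          exacts [min_le_right _ _, min_le_left _ _]
      _ = a ^ 2 / (2 * (4 * xi r * (Aᵀ * A).trace)) := by ring
  · calc 1 / 4 * min r (1 / (2 * xi r)) * min (a ^ 2 / (Aᵀ * A).trace) (a / ‖A‖)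
        ≤ 1 / 4 * r * (a / ‖A‖) := by
          gcongr
          exacts [min_le_left _ _, min_le_right _ _]
      _ = a * (r / (2 * ‖A‖)) / 2 := by ring

end QuadraticForm

theorem hanson_wright_kappa (n : ℕ) (A : Matrix (Fin n) (Fin n) ℝ)
    (hsymm : A.IsSymm) (hA : A ≠ 0) (a : ℝ) (ha : 0 < a) :
    (Measure.pi fun _ : Fin n => gaussianReal 0 1)
        {x | a ≤ |x ⬝ᵥ A.mulVec x -
          ∫ y, y ⬝ᵥ A.mulVec y ∂(Measure.pi fun _ : Fin n => gaussianReal 0 1)|}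
      ≤ ENNReal.ofReal (2 * Real.exp
          (-kappa * min (a ^ 2 / (Aᵀ * A).trace) (a / opNorm A))) := by
  have hherm : A.IsHermitian := isHermitian_iff_isSymm.2 hsymm
  rw [← ofReal_measureReal, opNorm_eq_l2_opNorm]
  exact ENNReal.ofReal_le_ofReal <| le_two_mul_exp_neg_kappa_mul fun r hr =>
    measureReal_abs_quadraticForm_sub_integral_ge_le hherm hr.1.le hr.2 ha.le
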